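/- Let T ⊆ 𝔹, β ∈ 𝔹(T), and suppose {σ^iβ : 0 < i < n_β} ∩ (T̃ − T) = {σ^{r₁}β, …, σ^{r_t}β} with t ≥ 1 and 0 < r₁ < ⋯ < r_t < n_β. Set T′ = T ∪ {σ^{r_t}β}. Then T̃′ = T̃ (where T̃′ is constructed from T′ as T̃ is from T), β ∈ 𝔹(T′) with the same value of n_β, and 𝒟_{T′,f_β} ∩ {κ ∈ ℚ^𝔹 : L_{T,σ^{r_i}β}(κ) ≥ 0 for all 1 ≤ i ≤ t} ⊆ 𝒟_{T,f_β}. -/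

import Mathlib

/- Setting: `B` is the finite nonempty set 𝔹 equipped with a permutation `σ` (Frobenius),
and `p` is a prime.  Weights live in `ℚ^𝔹 = (B → ℚ)`.  The orbits `𝔹_𝔭` of `σ` are the sets
`orbit σ β`, and for `T ⊆ 𝔹` we have `T_𝔭 = T ∩ orbit σ β`. -/

open scoped Classical

noncomputable section

namespace GO

variable {B : Type*} [Fintype B] [DecidableEq B]

/-- The standard basis vector `e_β` of `ℚ^𝔹`. -/
def e (β : B) : B → ℚ := fun τ => if τ = β then 1 else 0

/-- `β'` lies in the `σ`-orbit of `β`. -/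
def sameOrbit (σ : Equiv.Perm B) (β β' : B) : Prop := ∃ n : ℕ, (σ ^ n) β = β'

/-- The `σ`-orbit `𝔹_𝔭` of `β`. -/
def orbit (σ : Equiv.Perm B) (β : B) : Set B := {τ | sameOrbit σ β τ}

/-- `|𝔹_𝔭|`, the cardinality of the orbit of `β`. -/
def orbitCard (σ : Equiv.Perm B) (β : B) : ℕ := (orbit σ β).ncard

/-- For `β`, `β'` in the same orbit: the unique `n` with `0 < n ≤ |𝔹_𝔭|` and `σ^n β' = β`,
realized as the least positive `n` with `σ^n β' = β`. -/
def steps (σ : Equiv.Perm B) (β' β : B) : ℕ := sInf {n : ℕ | 0 < n ∧ (σ ^ n) β' = β}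

/-- For `β`, `β'` in the same orbit: the unique `n` with `0 ≤ n < |𝔹_𝔭|` and `σ^n β = β'`. -/
def steps0 (σ : Equiv.Perm B) (β β' : B) : ℕ := sInf {n : ℕ | (σ ^ n) β = β'}

/-- `h_β^{β'} = -e_β + p^n e_{β'}` where `β = σ^n β'` with `0 < n ≤ |𝔹_𝔭|`. -/
def hvec (σ : Equiv.Perm B) (p : ℕ) (β β' : B) : B → ℚ :=
  -(e β) + ((p : ℚ) ^ steps σ β' β) • e β'

/-- `b_β^{β'} = e_β + p^n e_{β'}` where `β = σ^n β'` with `0 < n ≤ |𝔹_𝔭|`. -/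
def bvec (σ : Equiv.Perm B) (p : ℕ) (β β' : B) : B → ℚ :=
  (e β) + ((p : ℚ) ^ steps σ β' β) • e β'

/-- `h_β = -e_β + p e_{σ⁻¹ β}`. -/
def hsimple (σ : Equiv.Perm B) (p : ℕ) (β : B) : B → ℚ := -(e β) + (p : ℚ) • e (σ⁻¹ β)

/-- `b_β = e_β + p e_{σ⁻¹ β}`. -/
def bsimple (σ : Equiv.Perm B) (p : ℕ) (β : B) : B → ℚ := (e β) + (p : ℚ) • e (σ⁻¹ β)

/-- The `ℚ^{≥0}`-cone generated by a set `S` of vectors: all finite nonnegative rational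
linear combinations of elements of `S`. -/
def cone {V : Type*} [AddCommMonoid V] [Module ℚ V] (S : Set V) : Set V :=
  {x | ∃ (n : ℕ) (c : Fin n → ℚ) (v : Fin n → V),
    (∀ i, 0 ≤ c i) ∧ (∀ i, v i ∈ S) ∧ x = ∑ i, c i • v i}

/-- A chain in `T` (automatically contained in a single orbit, so this is the notion of a
chain in `T_𝔭` for `T_𝔭 ⊊ 𝔹_𝔭`): `C = {σ^{-i}β : 0 ≤ i ≤ m} ⊆ T` with `σβ ∉ T` and
`σ^{-m-1}β ∉ T`. -/
def IsChainIn (σ : Equiv.Perm B) (T : Set B) (C : Set B) : Prop :=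
  ∃ (β : B) (m : ℕ), σ β ∉ T ∧ (σ⁻¹ ^ (m + 1)) β ∉ T ∧
    (∀ i ≤ m, (σ⁻¹ ^ i) β ∈ T) ∧ C = {τ | ∃ i ≤ m, τ = (σ⁻¹ ^ i) β}

/-- `C̃` for a chain `C`: equals `C` if `m` is odd (i.e. `|C| = m+1` is even), and
`C ∪ {σ^{-m-1}β} = C ∪ σ⁻¹(C)` if `m` is even (i.e. `|C|` odd). -/
def chainExt (σ : Equiv.Perm B) (C : Set B) : Set B :=
  if Odd C.ncard then C ∪ (⇑σ⁻¹ '' C) else C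

/-- `T̃ = ⋃_𝔭 T̃_𝔭`: the union of `T` with the extensions `C̃` of all chains `C` in `T`.
(For orbits with `T_𝔭 = 𝔹_𝔭` there are no chains and `T̃_𝔭 = 𝔹_𝔭 = T_𝔭`.) -/
def tilde (σ : Equiv.Perm B) (T : Set B) : Set B :=
  T ∪ ⋃ (C : Set B) (_ : IsChainIn σ T C), chainExt σ C

/-- `μ_β`: the least `i > 0` with `σ^i β ∉ T` if `T_𝔭 ≠ 𝔹_𝔭`, and `0` if `T_𝔭 = 𝔹_𝔭`. -/
def mu (σ : Equiv.Perm B) (T : Set B) (β : B) : ℕ :=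
  if orbit σ β ⊆ T then 0 else sInf {i : ℕ | 0 < i ∧ (σ ^ i) β ∉ T}

/-- `n_β`: the least `i > 0` with `σ^i β ∉ T̃` (meaningful when `T̃_𝔭 ≠ 𝔹_𝔭`). -/
def nn (σ : Equiv.Perm B) (T : Set B) (β : B) : ℕ :=
  sInf {i : ℕ | 0 < i ∧ (σ ^ i) β ∉ tilde σ T}

/-- `ν_β`: the least `i ≥ 0` with `σ^{-i} β ∉ T` (meaningful when `T_𝔭 ≠ 𝔹_𝔭`). -/
def nu (σ : Equiv.Perm B) (T : Set B) (β : B) : ℕ :=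
  sInf {i : ℕ | (σ⁻¹ ^ i) β ∉ T}

/-- `𝒯(T_𝔭) = (𝔹_𝔭 − T̃_𝔭) ∪ σ(T̃_𝔭 − T_𝔭)`, taken globally (union over all `𝔭`). -/
def Tscr (σ : Equiv.Perm B) (T : Set B) : Set B :=
  (tilde σ T)ᶜ ∪ (⇑σ '' (tilde σ T \ T))

/-- The generating set `⋃_𝔭 𝒢(T_𝔭)`:
`{h_β^{β'} : β ∈ ℋ(T_𝔭), β' ∈ 𝒯(T_𝔭)} ∪ {±b_β : β ∈ T_𝔭}` over all `𝔭`. -/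
def Dgen (σ : Equiv.Perm B) (p : ℕ) (T : Set B) : Set (B → ℚ) :=
  {v | ∃ β β', β ∉ T ∧ β' ∈ Tscr σ T ∧ sameOrbit σ β β' ∧ v = hvec σ p β β'}
  ∪ {v | ∃ β ∈ T, v = bsimple σ p β ∨ v = -(bsimple σ p β)}

/-- The cone `𝒟_T`. -/
def D (σ : Equiv.Perm B) (p : ℕ) (T : Set B) : Set (B → ℚ) := cone (Dgen σ p T)

/-- `h_{σ^{n_β}β}^{β} = -e_{σ^{n_β}β} + p^{n_β} e_β`. -/
def fH (σ : Equiv.Perm B) (p : ℕ) (T : Set B) (β : B) : B → ℚ :=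
  -(e ((σ ^ nn σ T β) β)) + ((p : ℚ) ^ nn σ T β) • e β

/-- `b_{σ^{n_β}β}^{β} = e_{σ^{n_β}β} + p^{n_β} e_β`. -/
def fB (σ : Equiv.Perm B) (p : ℕ) (T : Set B) (β : B) : B → ℚ :=
  (e ((σ ^ nn σ T β) β)) + ((p : ℚ) ^ nn σ T β) • e β

/-- The generating set `⋃_𝔭 𝒢′(T_𝔭)`:
if `𝔹_𝔭 − T̃_𝔭 ≠ ∅` it is `{h_{σ^{n_β}β}^β : β ∈ 𝔹_𝔭 − T̃_𝔭} ∪ {−b_{σ^{n_β}β}^β : β ∈ T̃_𝔭 − T_𝔭}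
∪ {±b_β : β ∈ T_𝔭}`, and if `𝔹_𝔭 = T̃_𝔭` it is `{−e_β : β ∈ 𝔹_𝔭 − T_𝔭} ∪ {±b_β : β ∈ T_𝔭}`. -/
def D'gen (σ : Equiv.Perm B) (p : ℕ) (T : Set B) : Set (B → ℚ) :=
  {v | ∃ β, β ∉ tilde σ T ∧ v = fH σ p T β}
  ∪ {v | ∃ β, β ∈ tilde σ T ∧ β ∉ T ∧ ¬ orbit σ β ⊆ tilde σ T ∧ v = -(fB σ p T β)}
  ∪ {v | ∃ β, β ∉ T ∧ orbit σ β ⊆ tilde σ T ∧ v = -(e β)}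
  ∪ {v | ∃ β ∈ T, v = bsimple σ p β ∨ v = -(bsimple σ p β)}

/-- The cone `𝒟′_T`. -/
def D' (σ : Equiv.Perm B) (p : ℕ) (T : Set B) : Set (B → ℚ) := cone (D'gen σ p T)

/-- `f_β(T)` for `β ∉ T`: `h_{σ^{n_β}β}^β` if `β ∈ 𝔹_𝔭 − T̃_𝔭`; `−b_{σ^{n_β}β}^β` if
`β ∈ T̃_𝔭 − T_𝔭` and `𝔹_𝔭 ≠ T̃_𝔭`; and `−(1+p^{|𝔹_𝔭|}) e_β` if `𝔹_𝔭 = T̃_𝔭`. -/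
def fvec (σ : Equiv.Perm B) (p : ℕ) (T : Set B) (β : B) : B → ℚ :=
  if orbit σ β ⊆ tilde σ T then -((1 + (p : ℚ) ^ orbitCard σ β) • e β)
  else if β ∈ tilde σ T then -(fB σ p T β) else fH σ p T β

/-- `𝔹(T) = ⋃_𝔭 𝔹_𝔭(T)`: `β ∈ 𝔹(T)` iff `β ∉ T`, the set `𝔹_𝔭 − T̃_𝔭` is nonempty, and
`𝔹_𝔭 − T̃_𝔭 ≠ {β}` (this encodes all three cases of the definition of `𝔹_𝔭(T)`). -/
def BT (σ : Equiv.Perm B) (T : Set B) : Set B :=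
  {β | β ∉ T ∧ (orbit σ β \ tilde σ T).Nonempty ∧ orbit σ β \ tilde σ T ≠ {β}}

/-- The sign function `ε_T : 𝔹 → {−1,0,1}`. -/
def epsT (σ : Equiv.Perm B) (T : Set B) (β : B) : ℚ :=
  if orbit σ β ⊆ T then 0
  else if β ∈ tilde σ T then (-1 : ℚ) ^ (mu σ T β - 1) else 1

/-- `L^ε[β, β'](κ) = Σ_{0 ≤ i ≤ n} ε(σ^iβ) p^i k_{σ^iβ}`, where `β' = σ^n β` with
`0 ≤ n < |𝔹_𝔭|`. -/
def Lfun (σ : Equiv.Perm B) (p : ℕ) (ε : B → ℚ) (β β' : B) (κ : B → ℚ) : ℚ :=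
  ∑ i ∈ Finset.range (steps0 σ β β' + 1), ε ((σ ^ i) β) * (p : ℚ) ^ i * κ ((σ ^ i) β)

/-- `L^ε[β] = L^ε[β, σ⁻¹β]`. -/
def Lfun1 (σ : Equiv.Perm B) (p : ℕ) (ε : B → ℚ) (β : B) (κ : B → ℚ) : ℚ :=
  Lfun σ p ε β (σ⁻¹ β) κ

/-- `L_{T,β}` for `β ∈ 𝔹 − T`: `L^{ε_T}[σ^{μ_β}β]` if `β ∈ 𝔹 − T̃`, and
`L^{ε_T}[β, σ^{μ_β−1}β]` if `β ∈ T̃ − T`. -/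
def LT (σ : Equiv.Perm B) (p : ℕ) (T : Set B) (β : B) (κ : B → ℚ) : ℚ :=
  if β ∈ tilde σ T then Lfun σ p (epsT σ T) β ((σ ^ (mu σ T β - 1)) β) κ
  else Lfun1 σ p (epsT σ T) ((σ ^ mu σ T β) β) κ

/-- `ε_{T,f_β}`: negates `ε_T` on `{β, σβ, …, σ^{μ_β−1}β}`. -/
def epsTf (σ : Equiv.Perm B) (T : Set B) (β τ : B) : ℚ :=
  if ∃ i < mu σ T β, τ = (σ ^ i) β then -(epsT σ T τ) else epsT σ T τ

/-- `L_{T,f_β,τ}` for `β ∈ 𝔹(T)` and `τ ∈ 𝔹 − (T ∪ {σ^{n_β}β})`, with `β′ = σ^{n_β}β` and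
`β̃ = σ^{μ_{β′}}β′`. -/
def LTf (σ : Equiv.Perm B) (p : ℕ) (T : Set B) (β τ : B) (κ : B → ℚ) : ℚ :=
  if τ = β then
    (if β ∈ tilde σ T then
      Lfun1 σ p (epsTf σ T β) ((σ ^ mu σ T ((σ ^ nn σ T β) β)) ((σ ^ nn σ T β) β)) κ
    else
      Lfun σ p (epsTf σ T β) β (σ⁻¹ ((σ ^ mu σ T ((σ ^ nn σ T β) β)) ((σ ^ nn σ T β) β))) κ)
  else
    (if τ ∈ tilde σ T then LT σ p T τ κ
     else Lfun1 σ p (epsTf σ T β) ((σ ^ mu σ T τ) τ) κ)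

/-- `𝒟_{T,f_β} = {κ : L_{T,f_β,τ}(κ) ≥ 0 for all τ ∈ 𝔹 − (T ∪ {σ^{n_β}β})}`. -/
def Df (σ : Equiv.Perm B) (p : ℕ) (T : Set B) (β : B) : Set (B → ℚ) :=
  {κ | ∀ τ, τ ∉ T → τ ≠ (σ ^ nn σ T β) β → 0 ≤ LTf σ p T β τ κ}

/-- `i_T : ℚ^𝔹 → ℚ^{𝔹−T}`, the linear map with `i_T(e_β) = 0` if `T_𝔭 = 𝔹_𝔭` and
`i_T(e_β) = (−p)^{ν_β} e_{σ^{−ν_β}β}` otherwise. -/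
def iT (σ : Equiv.Perm B) (p : ℕ) (T : Set B) (κ : B → ℚ) : {β : B // β ∉ T} → ℚ :=
  fun β₀ => ∑ β : B, κ β *
    (if orbit σ β ⊆ T then 0
     else if (σ⁻¹ ^ nu σ T β) β = β₀.1 then (-(p : ℚ)) ^ nu σ T β else 0)

/-- Restriction to `ℚ^{𝔹−T}` of a vector of `ℚ^𝔹` (used for vectors supported on `𝔹 − T`). -/
def res (T : Set B) (v : B → ℚ) : {β : B // β ∉ T} → ℚ := fun β => v β.1

/-- The generating set `𝒢^{T-red}(T) = ⋃_𝔭 𝒢_𝔭^{T-red}(T)` of the reduced cone. -/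
def Gred (σ : Equiv.Perm B) (p : ℕ) (T : Set B) : Set ({β : B // β ∉ T} → ℚ) :=
  {v | ∃ β, β ∉ tilde σ T ∧ v = res T (fH σ p T β)}
  ∪ {v | ∃ β, β ∈ tilde σ T ∧ β ∉ T ∧ ¬ orbit σ β ⊆ tilde σ T ∧ v = res T (-(fB σ p T β))}
  ∪ {v | ∃ β, β ∉ T ∧ orbit σ β ⊆ tilde σ T ∧ v = res T (-(e β))}

/-- The minimal cone `𝒞^min_T = i_T(𝒟_T ∩ ⋂_{β ∈ 𝔹(T)} 𝒟_{T,f_β}) ⊆ ℚ^{𝔹−T}`. -/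
def Cmin (σ : Equiv.Perm B) (p : ℕ) (T : Set B) : Set ({β : B // β ∉ T} → ℚ) :=
  iT σ p T '' (D σ p T ∩ {κ | ∀ β ∈ BT σ T, κ ∈ Df σ p T β})

/-- `g_β`: `b_β` if `β ∈ T_𝔭`; `−e_β` if `β ∈ T̃_𝔭 − T_𝔭` and `𝔹_𝔭 = T̃_𝔭`;
`−b_{σ^{n_β}β}^β` if `β ∈ T̃_𝔭 − T_𝔭` and `𝔹_𝔭 ≠ T̃_𝔭`; `h_{σ^{n_β}β}^β` if `β ∈ 𝔹_𝔭 − T̃_𝔭`. -/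
def gvec (σ : Equiv.Perm B) (p : ℕ) (T : Set B) (β : B) : B → ℚ :=
  if β ∈ T then bsimple σ p β
  else if orbit σ β ⊆ tilde σ T then -(e β)
  else if β ∈ tilde σ T then -(fB σ p T β)
  else fH σ p T β

/-- The map `σ̄ : β ↦ σ^{n_β} β`. -/
def sigbar (σ : Equiv.Perm B) (T : Set B) (β : B) : B := (σ ^ nn σ T β) β

/-- `h_β = -e_β + p e_{σ⁻¹β}` as an element of `ℤ^𝔹`. -/
def hZ (σ : Equiv.Perm B) (p : ℕ) (β : B) : B → ℤ :=
  fun τ => (if τ = β then -1 else 0) + (if τ = σ⁻¹ β then (p : ℤ) else 0)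

end GO

end

/-!
Adjoin `ρ = σ^{r_t}β` to `T`. Outside `T`, membership in `T̃` is the parity of the first exit time
`μ` from `T`. Since `μ_ρ` is even, adjoining `ρ` changes no such parity, so `T̃`, `n_β` and `ε_T`
are unchanged. The arc from `ρ` up to `σ^{n_β}β` contains no other element outside `T`, so the only
thing that can change is the arc on which `ε_{T,f_β}` flips the signs of `ε_T`: when `μ_β = r_t`,
it grows by exactly the arc starting at `ρ`. There the functionals for `T` and for `T′` have
opposite signs, and their difference is a nonnegative multiple of `L_{T,ρ}`.
-/

namespace GO

open Function

variable {B : Type*} {σ : Equiv.Perm B} {p : ℕ} {S T : Set B} {x y : B} {i j k m n : ℕ}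

section Powers

theorem pow_apply_pow_apply (σ : Equiv.Perm B) (i j : ℕ) (x : B) :
    (σ ^ i) ((σ ^ j) x) = (σ ^ (i + j)) x := by
  rw [pow_add, Equiv.Perm.mul_apply]

theorem eq_pow_sub_apply (hij : i ≤ j) (h : (σ ^ i) x = (σ ^ j) y) : x = (σ ^ (j - i)) y := by
  apply (σ ^ i).injective
  rw [h, pow_apply_pow_apply, Nat.add_sub_cancel' hij]

theorem inv_apply_pow_apply (σ : Equiv.Perm B) (hn : 0 < n) (x : B) :
    σ⁻¹ ((σ ^ n) x) = (σ ^ (n - 1)) x := by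
  rw [Equiv.Perm.inv_eq_iff_eq, ← Equiv.Perm.mul_apply, ← pow_succ', Nat.sub_add_cancel hn]

theorem inv_pow_apply_pow_apply (σ : Equiv.Perm B) (hij : i ≤ j) (x : B) :
    (σ⁻¹ ^ i) ((σ ^ j) x) = (σ ^ (j - i)) x := by
  rw [inv_pow, Equiv.Perm.inv_eq_iff_eq, pow_apply_pow_apply, Nat.add_sub_cancel' hij]

theorem pow_minimalPeriod_apply (σ : Equiv.Perm B) (x : B) : (σ ^ minimalPeriod σ x) x = x := by
  rw [← Equiv.Perm.iterate_eq_pow, iterate_minimalPeriod]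

theorem pow_apply_eq_pow_apply_iff_of_lt_minimalPeriod (hi : i < minimalPeriod σ x)
    (hj : j < minimalPeriod σ x) : (σ ^ i) x = (σ ^ j) x ↔ i = j := by
  simpa only [Equiv.Perm.iterate_eq_pow] using iterate_eq_iterate_iff_of_lt_minimalPeriod hi hj

theorem exists_lt_minimalPeriod_pow_apply_eq (hx : x ∈ periodicPts σ) (k : ℕ) :
    ∃ i < minimalPeriod σ x, (σ ^ i) x = (σ ^ k) x := by
  refine ⟨k % minimalPeriod σ x, Nat.mod_lt _ (minimalPeriod_pos_of_mem_periodicPts hx), ?_⟩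
  simpa only [Equiv.Perm.iterate_eq_pow] using iterate_mod_minimalPeriod_eq (f := σ) (n := k)

theorem exists_pow_apply_eq_of_pow_apply_eq (hy : y ∈ periodicPts σ)
    (h : (σ ^ i) x = (σ ^ j) y) : ∃ k, (σ ^ k) x = y := by
  obtain ⟨N, hN, hper⟩ := hy
  refine ⟨N * j - j + i, ?_⟩
  rw [← pow_apply_pow_apply, h, pow_apply_pow_apply,
    Nat.sub_add_cancel (Nat.le_mul_of_pos_left j hN), ← Equiv.Perm.iterate_eq_pow]
  exact hper.mul_const j

theorem not_orbit_subset_of_notMem (hx : x ∉ T) : ¬ orbit σ x ⊆ T :=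
  fun h => hx (h ⟨0, rfl⟩)

end Powers

/-- `k` is the least positive integer with `σ^k x ∉ T`. Both `μ_x` and `n_x` are first exit times,
from `T` and from `T̃`; as a relation the notion has no junk value when `T` is never left. -/
structure IsFirstExit (σ : Equiv.Perm B) (T : Set B) (x : B) (k : ℕ) : Prop where
  pos : 0 < k
  notMem : (σ ^ k) x ∉ T
  mem : ∀ ⦃j⦄, 0 < j → j < k → (σ ^ j) x ∈ T

theorem isFirstExit_iff_isLeast :
    IsFirstExit σ T x k ↔ IsLeast {i | 0 < i ∧ (σ ^ i) x ∉ T} k := by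
  constructor
  · intro h
    exact ⟨⟨h.pos, h.notMem⟩, fun i hi => not_lt.mp fun hik => hi.2 (h.mem hi.1 hik)⟩
  · intro h
    exact ⟨h.1.1, h.1.2, fun j hj hjk => by_contra fun hjT => hjk.not_ge (h.2 ⟨hj, hjT⟩)⟩

theorem isFirstExit_sInf (h : ∃ i, 0 < i ∧ (σ ^ i) x ∉ T) :
    IsFirstExit σ T x (sInf {i | 0 < i ∧ (σ ^ i) x ∉ T}) :=
  isFirstExit_iff_isLeast.mpr (isLeast_csInf h)

theorem exists_pos_pow_apply_notMem (hx : x ∈ periodicPts σ) (h : ¬ orbit σ x ⊆ T) :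
    ∃ i, 0 < i ∧ (σ ^ i) x ∉ T := by
  obtain ⟨-, ⟨n, rfl⟩, hn⟩ := Set.not_subset.mp h
  refine ⟨n + minimalPeriod σ x, ?_, ?_⟩
  · exact Nat.add_pos_right n (minimalPeriod_pos_of_mem_periodicPts hx)
  · rwa [← pow_apply_pow_apply, pow_minimalPeriod_apply]

theorem isFirstExit_mu (hx : x ∈ periodicPts σ) (h : ¬ orbit σ x ⊆ T) :
    IsFirstExit σ T x (mu σ T x) := by
  rw [mu, if_neg h]
  exact isFirstExit_sInf (exists_pos_pow_apply_notMem hx h)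

namespace IsFirstExit

theorem unique (h : IsFirstExit σ T x k) (h' : IsFirstExit σ T x m) : k = m :=
  (isFirstExit_iff_isLeast.mp h).unique (isFirstExit_iff_isLeast.mp h')

theorem not_orbit_subset (h : IsFirstExit σ T x k) : ¬ orbit σ x ⊆ T :=
  fun hsub => h.notMem (hsub ⟨k, rfl⟩)

theorem mu_eq (h : IsFirstExit σ T x k) : mu σ T x = k := by
  rw [mu, if_neg h.not_orbit_subset]
  exact (isFirstExit_iff_isLeast.mp h).csInf_eq

theorem le_of_pos_of_notMem (h : IsFirstExit σ T x k) (hi : 0 < i) (hiT : (σ ^ i) x ∉ T) :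
    k ≤ i :=
  (isFirstExit_iff_isLeast.mp h).2 ⟨hi, hiT⟩

theorem exists_of_subset (h : IsFirstExit σ S x k) (hTS : T ⊆ S) : ∃ m, IsFirstExit σ T x m :=
  ⟨_, isFirstExit_sInf ⟨k, h.pos, fun hk => h.notMem (hTS hk)⟩⟩

theorem pow_apply_ne (h : IsFirstExit σ T x k) (hij : i < j) (hj : j < k) :
    (σ ^ i) x ≠ (σ ^ j) x := by
  intro he
  have hper : x = (σ ^ (j - i)) x := eq_pow_sub_apply hij.le he
  have hexit : (σ ^ k) x = (σ ^ (k - (j - i))) x := by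
    conv_rhs => rw [hper, pow_apply_pow_apply, Nat.sub_add_cancel (by omega)]
  exact h.notMem (hexit ▸ h.mem (by omega) (by omega))

theorem injOn (h : IsFirstExit σ T x k) : Set.InjOn (fun i => (σ ^ i) x) (Set.Iio k) := by
  intro i hi j hj he
  rcases lt_trichotomy i j with hij | hij | hij
  · exact absurd he (h.pow_apply_ne hij hj)
  · exact hij
  · exact absurd he.symm (h.pow_apply_ne hij hi)

theorem le_minimalPeriod (h : IsFirstExit σ T x k) (hx : x ∈ periodicPts σ) :
    k ≤ minimalPeriod σ x := by
  by_contra! hlt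
  refine h.pow_apply_ne (minimalPeriod_pos_of_mem_periodicPts hx) hlt ?_
  rw [pow_minimalPeriod_apply, pow_zero, Equiv.Perm.one_apply]

theorem add_le_minimalPeriod (h : IsFirstExit σ T ((σ ^ n) x) m) (hx : x ∉ T)
    (hn : n < minimalPeriod σ x) : n + m ≤ minimalPeriod σ x := by
  have hm : m ≤ minimalPeriod σ x - n := by
    refine h.le_of_pos_of_notMem (Nat.sub_pos_of_lt hn) ?_
    rwa [pow_apply_pow_apply, Nat.sub_add_cancel hn.le, pow_minimalPeriod_apply]
  omega

theorem exists_lt_eq_pow_apply (h : IsFirstExit σ T y k) (hx : x ∉ T) (hn : 0 < n)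
    (he : (σ ^ k) y = (σ ^ n) x) : ∃ i < n, y = (σ ^ i) x := by
  rcases le_or_gt k n with hkn | hnk
  · exact ⟨n - k, Nat.sub_lt hn h.pos, eq_pow_sub_apply hkn he⟩
  · exact absurd (eq_pow_sub_apply hnk.le he.symm ▸ h.mem (by omega) (by omega)) hx

end IsFirstExit

section Tilde

theorem subset_tilde (σ : Equiv.Perm B) (T : Set B) : T ⊆ tilde σ T :=
  Set.subset_union_left

theorem setOf_inv_pow_apply_eq_image_Ioo (σ : Equiv.Perm B) (x : B) (m : ℕ) :
    {τ | ∃ i ≤ m, τ = (σ⁻¹ ^ i) ((σ ^ (m + 1)) x)} = (fun i => (σ ^ i) x) '' Set.Ioo 0 (m + 2) := by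
  ext τ
  constructor
  · rintro ⟨i, hi, rfl⟩
    exact ⟨m + 1 - i, ⟨by omega, by omega⟩, (inv_pow_apply_pow_apply σ (by omega) x).symm⟩
  · rintro ⟨i, ⟨hi, him⟩, rfl⟩
    refine ⟨m + 1 - i, by omega, ?_⟩
    rw [inv_pow_apply_pow_apply σ (by omega), Nat.sub_sub_self (by omega)]

/- A chain is here described from its lower end: `x = σ^{-m-1}β` in the notation of `IsChainIn`,
and `k = m + 2`. -/
theorem isChainIn_iff {C : Set B} :
    IsChainIn σ T C ↔ ∃ x k, x ∉ T ∧ 1 < k ∧ IsFirstExit σ T x k ∧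
      C = (fun i => (σ ^ i) x) '' Set.Ioo 0 k := by
  constructor
  · rintro ⟨b, m, htop, hbot, hmem, rfl⟩
    obtain ⟨x, rfl⟩ := (σ ^ (m + 1)).surjective b
    refine ⟨x, m + 2, ?_, by omega, ⟨by omega, ?_, fun j hj hjm => ?_⟩,
      setOf_inv_pow_apply_eq_image_Ioo σ x m⟩
    · simpa [inv_pow_apply_pow_apply σ le_rfl] using hbot
    · rwa [pow_succ', Equiv.Perm.mul_apply]
    · have hj' := hmem (m + 1 - j) (by omega)
      rwa [inv_pow_apply_pow_apply σ (by omega), Nat.sub_sub_self (by omega)] at hj'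
  · rintro ⟨x, k, hx, hk, h, rfl⟩
    obtain ⟨m, rfl⟩ := Nat.exists_eq_add_of_le' hk
    refine ⟨(σ ^ (m + 1)) x, m, ?_, ?_, fun i hi => ?_,
      (setOf_inv_pow_apply_eq_image_Ioo σ x m).symm⟩
    · rw [← Equiv.Perm.mul_apply, ← pow_succ']
      exact h.notMem
    · simpa [inv_pow_apply_pow_apply σ le_rfl] using hx
    · rw [inv_pow_apply_pow_apply σ (by omega)]
      exact h.mem (by omega) (by omega)

theorem IsFirstExit.mem_chainExt_iff (h : IsFirstExit σ T y k) (hx : x ∉ T) (hk : 1 < k) :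
    x ∈ chainExt σ ((fun i => (σ ^ i) y) '' Set.Ioo 0 k) ↔ x = y ∧ Even k := by
  have hcard : ((fun i => (σ ^ i) y) '' Set.Ioo 0 k).ncard = k - 1 := by
    rw [(h.injOn.mono Set.Ioo_subset_Iio_self).ncard_image, Set.ncard_Ioo_nat, Nat.sub_zero]
  have hodd : Odd (k - 1) ↔ Even k := by
    rw [Nat.odd_sub' hk.le]
    simp
  have hxC : x ∉ (fun i => (σ ^ i) y) '' Set.Ioo 0 k := by
    rintro ⟨i, hi, rfl⟩
    exact hx (h.mem hi.1 hi.2)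
  simp only [chainExt, hcard, hodd]
  split_ifs with hev
  · simp only [Set.mem_union, hxC, false_or, hev, and_true]
    constructor
    · rintro ⟨-, ⟨i, ⟨hi, hik⟩, rfl⟩, rfl⟩
      simp only [inv_apply_pow_apply σ hi] at hx ⊢
      rcases Nat.eq_zero_or_pos (i - 1) with h0 | hpos
      · rw [h0, pow_zero, Equiv.Perm.one_apply]
      · exact absurd (h.mem hpos (by omega)) hx
    · rintro rfl
      exact ⟨σ x, ⟨1, ⟨Nat.one_pos, hk⟩, by simp⟩, by simp⟩
  · simp [hxC, hev]

theorem mem_tilde_iff_of_notMem (hx : x ∉ T) :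
    x ∈ tilde σ T ↔ ∃ k, IsFirstExit σ T x k ∧ Even k := by
  simp only [tilde, Set.mem_union, hx, false_or, Set.mem_iUnion, isChainIn_iff]
  constructor
  · rintro ⟨-, ⟨y, k, -, hk, h, rfl⟩, hxC⟩
    obtain ⟨rfl, hev⟩ := (h.mem_chainExt_iff hx hk).mp hxC
    exact ⟨k, h, hev⟩
  · rintro ⟨k, h, hev⟩
    have hk : 1 < k := by
      obtain ⟨l, rfl⟩ := hev
      have := h.pos
      omega
    exact ⟨_, ⟨x, k, hx, hk, h, rfl⟩, (h.mem_chainExt_iff hx hk).mpr ⟨rfl, hev⟩⟩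

end Tilde

section Adjoin

variable {ρ : B}

theorem IsFirstExit.union_singleton_of_ne (h : IsFirstExit σ T x k) (hne : (σ ^ k) x ≠ ρ) :
    IsFirstExit σ (T ∪ {ρ}) x k where
  pos := h.pos
  notMem := not_or.mpr ⟨h.notMem, hne⟩
  mem _ hj hjk := Or.inl (h.mem hj hjk)

theorem IsFirstExit.union_singleton_of_eq (h : IsFirstExit σ T x k) (he : (σ ^ k) x = ρ)
    (hρ : IsFirstExit σ T ρ m) (hne : (σ ^ m) ρ ≠ ρ) : IsFirstExit σ (T ∪ {ρ}) x (k + m) where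
  pos := Nat.add_pos_left h.pos m
  notMem := by
    rw [add_comm, ← pow_apply_pow_apply, he]
    exact not_or.mpr ⟨hρ.notMem, hne⟩
  mem j hj hjkm := by
    rcases lt_trichotomy j k with hjk | rfl | hkj
    · exact Or.inl (h.mem hj hjk)
    · exact Or.inr he
    · have hmem := hρ.mem (Nat.sub_pos_of_lt hkj) (by omega)
      rw [← he, pow_apply_pow_apply, Nat.sub_add_cancel hkj.le] at hmem
      exact Or.inl hmem

theorem IsFirstExit.exists_union_singleton (h : IsFirstExit σ T x k) (hρ : IsFirstExit σ T ρ m)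
    (hm : Even m) (hne : (σ ^ m) ρ ≠ ρ) :
    ∃ l, IsFirstExit σ (T ∪ {ρ}) x l ∧ (Even l ↔ Even k) := by
  by_cases he : (σ ^ k) x = ρ
  · exact ⟨k + m, h.union_singleton_of_eq he hρ hne, by simp [Nat.even_add, hm]⟩
  · exact ⟨k, h.union_singleton_of_ne he, Iff.rfl⟩

theorem tilde_union_singleton (hρT : ρ ∉ T) (hρ : IsFirstExit σ T ρ m) (hm : Even m)
    (hne : (σ ^ m) ρ ≠ ρ) : tilde σ (T ∪ {ρ}) = tilde σ T := by
  ext x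
  by_cases hx : x ∈ T ∪ {ρ}
  · refine iff_of_true (subset_tilde σ _ hx) ?_
    rcases hx with hx | rfl
    · exact subset_tilde σ T hx
    · exact (mem_tilde_iff_of_notMem hρT).mpr ⟨m, hρ, hm⟩
  rw [mem_tilde_iff_of_notMem hx, mem_tilde_iff_of_notMem fun hxT => hx (Or.inl hxT)]
  constructor
  · rintro ⟨l, hl, hev⟩
    obtain ⟨k, hk⟩ := hl.exists_of_subset Set.subset_union_left
    obtain ⟨l', hl', hiff⟩ := hk.exists_union_singleton hρ hm hne
    exact ⟨k, hk, hiff.mp (hl.unique hl' ▸ hev)⟩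
  · rintro ⟨k, hk, hev⟩
    obtain ⟨l, hl, hiff⟩ := hk.exists_union_singleton hρ hm hne
    exact ⟨l, hl, hiff.mpr hev⟩

theorem orbit_subset_union_singleton_iff (hρ : IsFirstExit σ T ρ m) (hne : (σ ^ m) ρ ≠ ρ) :
    orbit σ x ⊆ T ∪ {ρ} ↔ orbit σ x ⊆ T := by
  refine ⟨fun h y hy => ?_, fun h => h.trans Set.subset_union_left⟩
  refine (h hy).resolve_right ?_
  rintro rfl
  obtain ⟨n, rfl⟩ := hy
  rcases h ⟨m + n, (pow_apply_pow_apply σ m n x).symm⟩ with hmem | heq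
  · exact hρ.notMem hmem
  · exact hne heq

theorem epsT_union_singleton (hσ : ∀ x, x ∈ periodicPts σ) (hρT : ρ ∉ T)
    (hρ : IsFirstExit σ T ρ m) (hm : Even m) (hne : (σ ^ m) ρ ≠ ρ) :
    epsT σ (T ∪ {ρ}) = epsT σ T := by
  funext x
  by_cases hx : orbit σ x ⊆ T
  · rw [epsT, epsT, if_pos hx, if_pos ((orbit_subset_union_singleton_iff hρ hne).mpr hx)]
  have hk := isFirstExit_mu (hσ x) hx
  obtain ⟨l, hl, hiff⟩ := hk.exists_union_singleton hρ hm hne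
  have hparity : Even (l - 1) ↔ Even (mu σ T x - 1) := by
    rw [Nat.even_sub hl.pos, Nat.even_sub hk.pos, hiff]
  rw [epsT, epsT, if_neg hl.not_orbit_subset, if_neg hx, tilde_union_singleton hρT hρ hm hne,
    hl.mu_eq, neg_one_pow_congr hparity]

end Adjoin

section ArcSum

variable {ε ε' κ : B → ℚ} {ρ : B} {N : ℕ}

/-- The arc `{x, σx, …, σ^{m-1}x}`. -/
def arc (σ : Equiv.Perm B) (x : B) (m : ℕ) : Set B :=
  {τ | ∃ i < m, τ = (σ ^ i) x}

/-- The functional `L^ε[x, σ^{m-1}x]`, with the arc it sums over given by its length `m` instead of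
its last element, so that arcs can be empty and concatenated. -/
def arcSum (σ : Equiv.Perm B) (p : ℕ) (ε : B → ℚ) (x : B) (m : ℕ) (κ : B → ℚ) : ℚ :=
  ∑ i ∈ Finset.range m, ε ((σ ^ i) x) * (p : ℚ) ^ i * κ ((σ ^ i) x)

theorem arc_add (σ : Equiv.Perm B) (x : B) (k m : ℕ) :
    arc σ x (k + m) = arc σ x k ∪ arc σ ((σ ^ k) x) m := by
  ext τ
  constructor
  · rintro ⟨i, hi, rfl⟩
    rcases lt_or_ge i k with hik | hki
    · exact Or.inl ⟨i, hik, rfl⟩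
    · exact Or.inr ⟨i - k, by omega, by rw [pow_apply_pow_apply, Nat.sub_add_cancel hki]⟩
  · rintro (⟨i, hi, rfl⟩ | ⟨i, hi, rfl⟩)
    · exact ⟨i, by omega, rfl⟩
    · exact ⟨i + k, by omega, pow_apply_pow_apply σ i k x⟩

theorem disjoint_arc (hinj : Set.InjOn (fun i => (σ ^ i) x) (Set.Iio (k + m))) :
    Disjoint (arc σ x k) (arc σ ((σ ^ k) x) m) := by
  rw [Set.disjoint_left]
  rintro - ⟨i, hi, rfl⟩ ⟨j, hj, he⟩
  rw [pow_apply_pow_apply] at he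
  have hij : i = j + k := hinj (Set.mem_Iio.mpr (by omega)) (Set.mem_Iio.mpr (by omega)) he
  omega

theorem piecewise_neg_of_eq_union {M : Type*} [InvolutiveNeg M] {s t u : Set B}
    (hu : u = s ∪ t) (hst : Disjoint s t) (f : B → M) :
    u.piecewise (-f) f = t.piecewise (-s.piecewise (-f) f) (s.piecewise (-f) f) := by
  subst hu
  funext τ
  by_cases ht : τ ∈ t
  · simp [ht, Set.disjoint_right.mp hst ht]
  · by_cases hs : τ ∈ s <;> simp [ht, hs]

theorem injOn_pow_apply_of_le_minimalPeriod (hN : N ≤ minimalPeriod σ x) :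
    Set.InjOn (fun i => (σ ^ i) x) (Set.Iio N) := fun _ hi _ hj he =>
  (pow_apply_eq_pow_apply_iff_of_lt_minimalPeriod (lt_of_lt_of_le hi hN)
    (lt_of_lt_of_le hj hN)).mp he

theorem arcSum_add (σ : Equiv.Perm B) (p : ℕ) (ε : B → ℚ) (x : B) (k m : ℕ) (κ : B → ℚ) :
    arcSum σ p ε x (k + m) κ =
      arcSum σ p ε x k κ + (p : ℚ) ^ k * arcSum σ p ε ((σ ^ k) x) m κ := by
  rw [arcSum, arcSum, arcSum, Finset.sum_range_add, Finset.mul_sum]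
  congr 1
  refine Finset.sum_congr rfl fun i _ => ?_
  rw [pow_apply_pow_apply, add_comm i k, pow_add]
  ring

theorem arcSum_neg (σ : Equiv.Perm B) (p : ℕ) (ε : B → ℚ) (x : B) (m : ℕ) (κ : B → ℚ) :
    arcSum σ p (-ε) x m κ = -arcSum σ p ε x m κ := by
  simp only [arcSum, Pi.neg_apply, neg_mul, Finset.sum_neg_distrib]

theorem arcSum_congr (h : Set.EqOn ε ε' (arc σ x m)) :
    arcSum σ p ε x m κ = arcSum σ p ε' x m κ :=
  Finset.sum_congr rfl fun i hi => by rw [h ⟨i, Finset.mem_range.mp hi, rfl⟩]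

theorem steps0_pow_apply (hn : n < minimalPeriod σ x) : steps0 σ x ((σ ^ n) x) = n := by
  refine IsLeast.csInf_eq ⟨rfl, fun j hj => not_lt.mp fun hjn => hjn.ne ?_⟩
  exact (pow_apply_eq_pow_apply_iff_of_lt_minimalPeriod (hjn.trans hn) hn).mp hj

theorem Lfun_pow_apply (hn : n < minimalPeriod σ x) :
    Lfun σ p ε x ((σ ^ n) x) κ = arcSum σ p ε x (n + 1) κ := by
  rw [Lfun, steps0_pow_apply hn, arcSum]

theorem Lfun_inv_pow_apply (hn : 0 < n) (hle : n ≤ minimalPeriod σ x) :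
    Lfun σ p ε x (σ⁻¹ ((σ ^ n) x)) κ = arcSum σ p ε x n κ := by
  rw [inv_apply_pow_apply σ hn, Lfun_pow_apply (by omega), Nat.sub_add_cancel hn]

theorem Lfun1_eq_arcSum (hx : x ∈ periodicPts σ) :
    Lfun1 σ p ε x κ = arcSum σ p ε x (minimalPeriod σ x) κ := by
  rw [← Lfun_inv_pow_apply (minimalPeriod_pos_of_mem_periodicPts hx) le_rfl,
    pow_minimalPeriod_apply, Lfun1]

theorem IsFirstExit.LT_eq_arcSum (h : IsFirstExit σ T x k) (hx : x ∈ periodicPts σ)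
    (hxT : x ∈ tilde σ T) : LT σ p T x κ = arcSum σ p (epsT σ T) x k κ := by
  have hle := h.le_minimalPeriod hx
  have hpos := h.pos
  rw [LT, if_pos hxT, h.mu_eq, Lfun_pow_apply (by omega), Nat.sub_add_cancel hpos]

theorem arcSum_piecewise_neg_add (hinj : Set.InjOn (fun i => (σ ^ i) x) (Set.Iio (k + (m + n)))) :
    arcSum σ p ((arc σ ((σ ^ k) x) m).piecewise (-ε) ε) x (k + (m + n)) κ +
      2 * ((p : ℚ) ^ k * arcSum σ p ε ((σ ^ k) x) m κ) = arcSum σ p ε x (k + (m + n)) κ := by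
  have hbefore : Disjoint (arc σ x k) (arc σ ((σ ^ k) x) m) :=
    disjoint_arc (hinj.mono (Set.Iio_subset_Iio (by omega)))
  have hafter : Disjoint (arc σ ((σ ^ k) x) m) (arc σ ((σ ^ m) ((σ ^ k) x)) n) := by
    rw [← add_assoc] at hinj
    have hdisj := disjoint_arc hinj
    rw [arc_add, Set.disjoint_union_left, add_comm k m, ← pow_apply_pow_apply] at hdisj
    exact hdisj.2
  rw [arcSum_add, arcSum_add, arcSum_add, arcSum_add,
    arcSum_congr ((Set.piecewise_eqOn_compl _ _ _).mono hbefore.subset_compl_right),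
    arcSum_congr (Set.piecewise_eqOn _ _ _),
    arcSum_congr ((Set.piecewise_eqOn_compl _ _ _).mono hafter.subset_compl_left), arcSum_neg]
  ring

theorem arcSum_piecewise_neg_le (hkm : k + m ≤ N) (hN : N ≤ minimalPeriod σ x)
    (hnonneg : 0 ≤ arcSum σ p ε ((σ ^ k) x) m κ) :
    arcSum σ p ((arc σ ((σ ^ k) x) m).piecewise (-ε) ε) x N κ ≤ arcSum σ p ε x N κ := by
  obtain ⟨n, rfl⟩ := Nat.exists_eq_add_of_le hkm
  rw [add_assoc] at hN ⊢
  have hflip := arcSum_piecewise_neg_add (p := p) (ε := ε) (κ := κ)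
    (injOn_pow_apply_of_le_minimalPeriod hN)
  exact hflip ▸ le_add_of_nonneg_right
    (mul_nonneg zero_le_two (mul_nonneg (pow_nonneg p.cast_nonneg k) hnonneg))

theorem IsFirstExit.Lfun1_piecewise_neg_le (h : IsFirstExit σ T ρ m) (hρ : ρ ∈ periodicPts σ)
    (hx : x ∈ periodicPts σ) (hxT : x ∉ T) (hnonneg : 0 ≤ arcSum σ p ε ρ m κ) :
    Lfun1 σ p ((arc σ ρ m).piecewise (-ε) ε) x κ ≤ Lfun1 σ p ε x κ := by
  rw [Lfun1_eq_arcSum hx, Lfun1_eq_arcSum hx]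
  by_cases horb : ∃ k, (σ ^ k) x = ρ
  · obtain ⟨k', rfl⟩ := horb
    obtain ⟨k, hk, he⟩ := exists_lt_minimalPeriod_pow_apply_eq hx k'
    rw [← he] at h hnonneg ⊢
    exact arcSum_piecewise_neg_le (h.add_le_minimalPeriod hxT hk) le_rfl hnonneg
  · refine (arcSum_congr ((Set.piecewise_eqOn_compl _ _ _).mono ?_)).le
    rintro - ⟨i, -, rfl⟩ ⟨j, -, he⟩
    exact horb (exists_pow_apply_eq_of_pow_apply_eq hρ he)

end ArcSum

section LastGap

variable {β : B} {R N : ℕ}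

theorem isFirstExit_nn_of_mem_BT (hx : x ∈ periodicPts σ) (hxT : x ∈ BT σ T) :
    IsFirstExit σ (tilde σ T) x (nn σ T x) :=
  isFirstExit_sInf (exists_pos_pow_apply_notMem hx (Set.sdiff_nonempty.mp hxT.2.1))

theorem nn_lt_minimalPeriod_of_mem_BT (hx : x ∈ periodicPts σ) (hxT : x ∈ BT σ T) :
    nn σ T x < minimalPeriod σ x := by
  have hexit := isFirstExit_nn_of_mem_BT hx hxT
  refine (hexit.le_minimalPeriod hx).lt_of_ne fun hn => ?_
  refine hxT.2.2 (hxT.2.1.subset_singleton_iff.mp ?_)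
  rintro - ⟨⟨j, rfl⟩, hj⟩
  obtain ⟨i, hi, he⟩ := exists_lt_minimalPeriod_pow_apply_eq hx j
  rcases Nat.eq_zero_or_pos i with rfl | hpos
  · exact he.symm
  · exact absurd (he ▸ hexit.mem hpos (hn ▸ hi)) hj

theorem pow_nn_apply_ne_self_of_mem_BT (hx : x ∈ periodicPts σ) (hxT : x ∈ BT σ T) :
    (σ ^ nn σ T x) x ≠ x := fun he =>
  (isFirstExit_nn_of_mem_BT hx hxT).pos.ne' <|
    (pow_apply_eq_pow_apply_iff_of_lt_minimalPeriod (nn_lt_minimalPeriod_of_mem_BT hx hxT)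
      (minimalPeriod_pos_of_mem_periodicPts hx)).mp he

theorem epsTf_eq_piecewise [DecidableEq B] (σ : Equiv.Perm B) (T : Set B) (β : B) :
    epsTf σ T β = (arc σ β (mu σ T β)).piecewise (-epsT σ T) (epsT σ T) := by
  funext τ
  by_cases hτ : τ ∈ arc σ β (mu σ T β)
  · rw [Set.piecewise_eq_of_mem _ _ _ hτ]
    exact if_pos hτ
  · rw [Set.piecewise_eq_of_notMem _ _ _ hτ]
    exact if_neg hτ

/-- `σ^R β` is the last element of `T̃ − T` among `σβ, …, σ^{n_β-1}β`, where `β ∈ 𝔹(T)`. This is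
what is used of the exponent `r_t` of the theorem. -/
structure IsLastGap (σ : Equiv.Perm B) (T : Set B) (β : B) (R : ℕ) : Prop where
  mem_BT : β ∈ BT σ T
  pos : 0 < R
  lt : R < nn σ T β
  mem_tilde : (σ ^ R) β ∈ tilde σ T
  notMem : (σ ^ R) β ∉ T
  mem_of_lt : ∀ ⦃j⦄, R < j → j < nn σ T β → (σ ^ j) β ∈ T

namespace IsLastGap

theorem pow_sub_apply (h : IsLastGap σ T β R) :
    (σ ^ (nn σ T β - R)) ((σ ^ R) β) = (σ ^ nn σ T β) β := by
  rw [pow_apply_pow_apply, Nat.sub_add_cancel h.lt.le]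

theorem firstExit_nn (h : IsLastGap σ T β R) (hσ : ∀ x, x ∈ periodicPts σ) :
    IsFirstExit σ (tilde σ T) β (nn σ T β) :=
  isFirstExit_nn_of_mem_BT (hσ β) h.mem_BT

theorem pow_nn_notMem (h : IsLastGap σ T β R) (hσ : ∀ x, x ∈ periodicPts σ) :
    (σ ^ nn σ T β) β ∉ T :=
  fun hmem => (h.firstExit_nn hσ).notMem (subset_tilde σ T hmem)

theorem firstExit (h : IsLastGap σ T β R) (hσ : ∀ x, x ∈ periodicPts σ) :
    IsFirstExit σ T ((σ ^ R) β) (nn σ T β - R) where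
  pos := Nat.sub_pos_of_lt h.lt
  notMem := h.pow_sub_apply ▸ h.pow_nn_notMem hσ
  mem j hj hjn := by
    rw [pow_apply_pow_apply]
    exact h.mem_of_lt (by omega) (by omega)

theorem even_sub (h : IsLastGap σ T β R) (hσ : ∀ x, x ∈ periodicPts σ) :
    Even (nn σ T β - R) := by
  obtain ⟨k, hk, hev⟩ := (mem_tilde_iff_of_notMem h.notMem).mp h.mem_tilde
  rwa [(h.firstExit hσ).unique hk]

theorem pow_sub_apply_ne (h : IsLastGap σ T β R) (hσ : ∀ x, x ∈ periodicPts σ) :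
    (σ ^ (nn σ T β - R)) ((σ ^ R) β) ≠ (σ ^ R) β := by
  intro he
  refine (h.firstExit_nn hσ).notMem ?_
  rw [← h.pow_sub_apply, he]
  exact h.mem_tilde

theorem tilde_union (h : IsLastGap σ T β R) (hσ : ∀ x, x ∈ periodicPts σ) :
    tilde σ (T ∪ {(σ ^ R) β}) = tilde σ T :=
  tilde_union_singleton h.notMem (h.firstExit hσ) (h.even_sub hσ) (h.pow_sub_apply_ne hσ)

theorem nn_union (h : IsLastGap σ T β R) (hσ : ∀ x, x ∈ periodicPts σ) :
    nn σ (T ∪ {(σ ^ R) β}) β = nn σ T β := by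
  rw [nn, nn, h.tilde_union hσ]

theorem epsT_union (h : IsLastGap σ T β R) (hσ : ∀ x, x ∈ periodicPts σ) :
    epsT σ (T ∪ {(σ ^ R) β}) = epsT σ T :=
  epsT_union_singleton hσ h.notMem (h.firstExit hσ) (h.even_sub hσ) (h.pow_sub_apply_ne hσ)

theorem pow_apply_ne_self (h : IsLastGap σ T β R) (hσ : ∀ x, x ∈ periodicPts σ) :
    (σ ^ R) β ≠ β :=
  ((h.firstExit_nn hσ).pow_apply_ne h.pos h.lt).symm

theorem mem_BT_union (h : IsLastGap σ T β R) (hσ : ∀ x, x ∈ periodicPts σ) :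
    β ∈ BT σ (T ∪ {(σ ^ R) β}) := by
  obtain ⟨hβT, hne, hne'⟩ := h.mem_BT
  rw [BT, Set.mem_ofPred, h.tilde_union hσ]
  exact ⟨not_or.mpr ⟨hβT, (h.pow_apply_ne_self hσ).symm⟩, hne, hne'⟩

theorem mu_union (h : IsLastGap σ T β R) (hσ : ∀ x, x ∈ periodicPts σ) (hx : x ∉ T)
    (hne : ∀ i < R, x ≠ (σ ^ i) β) : mu σ (T ∪ {(σ ^ R) β}) x = mu σ T x := by
  have hexit := isFirstExit_mu (hσ x) (not_orbit_subset_of_notMem hx)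
  refine (hexit.union_singleton_of_ne fun he => ?_).mu_eq
  obtain ⟨i, hi, hxi⟩ := hexit.exists_lt_eq_pow_apply h.mem_BT.1 h.pos he
  exact hne i hi hxi

theorem mu_union_pow_nn (h : IsLastGap σ T β R) (hσ : ∀ x, x ∈ periodicPts σ) :
    mu σ (T ∪ {(σ ^ R) β}) ((σ ^ nn σ T β) β) = mu σ T ((σ ^ nn σ T β) β) := by
  refine h.mu_union hσ (h.pow_nn_notMem hσ) fun i hi he => ?_
  rcases Nat.eq_zero_or_pos i with rfl | hpos
  · exact pow_nn_apply_ne_self_of_mem_BT (hσ β) h.mem_BT he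
  · have hexit := h.firstExit_nn hσ
    exact hexit.notMem (he ▸ hexit.mem hpos (hi.trans h.lt))

theorem LT_union (h : IsLastGap σ T β R) (hσ : ∀ x, x ∈ periodicPts σ) (hx : x ∉ T)
    (hne : ∀ i < R, x ≠ (σ ^ i) β) (κ : B → ℚ) :
    LT σ p (T ∪ {(σ ^ R) β}) x κ = LT σ p T x κ := by
  rw [LT, LT, h.tilde_union hσ, h.epsT_union hσ, h.mu_union hσ hx hne]

theorem disjoint_arc_arc (h : IsLastGap σ T β R) (hσ : ∀ x, x ∈ periodicPts σ) :
    Disjoint (arc σ β R) (arc σ ((σ ^ R) β) (nn σ T β - R)) := by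
  apply disjoint_arc
  rw [Nat.add_sub_cancel' h.lt.le]
  exact (h.firstExit_nn hσ).injOn

variable {κ : B → ℚ} [DecidableEq B]

theorem epsTf_union_of_mu_ne (h : IsLastGap σ T β R) (hσ : ∀ x, x ∈ periodicPts σ)
    (hmu : mu σ T β ≠ R) : epsTf σ (T ∪ {(σ ^ R) β}) β = epsTf σ T β := by
  have hexit := isFirstExit_mu (hσ β) (not_orbit_subset_of_notMem h.mem_BT.1)
  have hlt : mu σ T β < R := (hexit.le_of_pos_of_notMem h.pos h.notMem).lt_of_ne hmu
  have hexit' := hexit.union_singleton_of_ne ((h.firstExit_nn hσ).pow_apply_ne hlt h.lt)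
  rw [epsTf_eq_piecewise, epsTf_eq_piecewise, hexit'.mu_eq, h.epsT_union hσ]

theorem epsTf_union_of_mu_eq (h : IsLastGap σ T β R) (hσ : ∀ x, x ∈ periodicPts σ)
    (hmu : mu σ T β = R) :
    epsTf σ (T ∪ {(σ ^ R) β}) β =
      (arc σ ((σ ^ R) β) (nn σ T β - R)).piecewise (-epsTf σ T β) (epsTf σ T β) := by
  have hexit := isFirstExit_mu (hσ β) (not_orbit_subset_of_notMem h.mem_BT.1)
  rw [hmu] at hexit
  have hexit' := hexit.union_singleton_of_eq rfl (h.firstExit hσ) (h.pow_sub_apply_ne hσ)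
  rw [epsTf_eq_piecewise, epsTf_eq_piecewise, hexit'.mu_eq, h.epsT_union hσ, hmu,
    piecewise_neg_of_eq_union (arc_add σ β R _) (h.disjoint_arc_arc hσ)]

theorem arcSum_epsTf_of_mu_eq (h : IsLastGap σ T β R) (hσ : ∀ x, x ∈ periodicPts σ)
    (hmu : mu σ T β = R) :
    arcSum σ p (epsTf σ T β) ((σ ^ R) β) (nn σ T β - R) κ = LT σ p T ((σ ^ R) β) κ := by
  rw [(h.firstExit hσ).LT_eq_arcSum (hσ _) h.mem_tilde, epsTf_eq_piecewise, hmu]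
  exact arcSum_congr
    ((Set.piecewise_eqOn_compl _ _ _).mono (h.disjoint_arc_arc hσ).subset_compl_left)

theorem Lfun1_epsTf_union_le (h : IsLastGap σ T β R) (hσ : ∀ x, x ∈ periodicPts σ) (hx : x ∉ T)
    (hnonneg : 0 ≤ LT σ p T ((σ ^ R) β) κ) :
    Lfun1 σ p (epsTf σ (T ∪ {(σ ^ R) β}) β) x κ ≤ Lfun1 σ p (epsTf σ T β) x κ := by
  by_cases hmu : mu σ T β = R
  · rw [← h.arcSum_epsTf_of_mu_eq hσ hmu] at hnonneg
    rw [h.epsTf_union_of_mu_eq hσ hmu]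
    exact (h.firstExit hσ).Lfun1_piecewise_neg_le (hσ _) (hσ x) hx hnonneg
  · rw [h.epsTf_union_of_mu_ne hσ hmu]

theorem arcSum_epsTf_union_le (h : IsLastGap σ T β R) (hσ : ∀ x, x ∈ periodicPts σ)
    (hnN : nn σ T β ≤ N) (hN : N ≤ minimalPeriod σ β) (hnonneg : 0 ≤ LT σ p T ((σ ^ R) β) κ) :
    arcSum σ p (epsTf σ (T ∪ {(σ ^ R) β}) β) β N κ ≤ arcSum σ p (epsTf σ T β) β N κ := by
  by_cases hmu : mu σ T β = R
  · rw [← h.arcSum_epsTf_of_mu_eq hσ hmu] at hnonneg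
    rw [h.epsTf_union_of_mu_eq hσ hmu]
    have hlt := h.lt
    exact arcSum_piecewise_neg_le (by omega) hN hnonneg
  · rw [h.epsTf_union_of_mu_ne hσ hmu]

theorem LTf_union_self_le (h : IsLastGap σ T β R) (hσ : ∀ x, x ∈ periodicPts σ)
    (hnonneg : 0 ≤ LT σ p T ((σ ^ R) β) κ) :
    LTf σ p (T ∪ {(σ ^ R) β}) β β κ ≤ LTf σ p T β β κ := by
  have hexit : IsFirstExit σ T ((σ ^ nn σ T β) β) (mu σ T ((σ ^ nn σ T β) β)) :=
    isFirstExit_mu (hσ _) (not_orbit_subset_of_notMem (h.pow_nn_notMem hσ))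
  rw [LTf, LTf, if_pos rfl, if_pos rfl, h.tilde_union hσ, h.nn_union hσ, h.mu_union_pow_nn hσ]
  by_cases hβ : β ∈ tilde σ T
  · rw [if_pos hβ, if_pos hβ]
    exact h.Lfun1_epsTf_union_le hσ hexit.notMem hnonneg
  · rw [if_neg hβ, if_neg hβ, pow_apply_pow_apply, add_comm]
    have hle := hexit.add_le_minimalPeriod h.mem_BT.1
      (nn_lt_minimalPeriod_of_mem_BT (hσ β) h.mem_BT)
    have hpos := Nat.add_pos_right (nn σ T β) hexit.pos
    rw [Lfun_inv_pow_apply hpos hle, Lfun_inv_pow_apply hpos hle]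
    exact h.arcSum_epsTf_union_le hσ (Nat.le_add_right _ _) hle hnonneg

theorem LTf_union_le_of_ne (h : IsLastGap σ T β R) (hσ : ∀ x, x ∈ periodicPts σ) (hx : x ∉ T)
    (hne : ∀ i < R, x ≠ (σ ^ i) β) (hnonneg : 0 ≤ LT σ p T ((σ ^ R) β) κ) :
    LTf σ p (T ∪ {(σ ^ R) β}) β x κ ≤ LTf σ p T β x κ := by
  have hexit := isFirstExit_mu (hσ x) (not_orbit_subset_of_notMem hx)
  have hxβ : x ≠ β := hne 0 h.pos
  rw [LTf, LTf, if_neg hxβ, if_neg hxβ, h.tilde_union hσ, h.LT_union hσ hx hne,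
    h.mu_union hσ hx hne]
  split_ifs
  · exact le_rfl
  · exact h.Lfun1_epsTf_union_le hσ hexit.notMem hnonneg

theorem LTf_pow_apply (h : IsLastGap σ T β R) (hσ : ∀ x, x ∈ periodicPts σ) (hi : 0 < i)
    (hin : i < nn σ T β) : LTf σ p T β ((σ ^ i) β) κ = LT σ p T ((σ ^ i) β) κ := by
  have hexit := h.firstExit_nn hσ
  have hne : (σ ^ i) β ≠ β := (hexit.pow_apply_ne hi hin).symm
  rw [LTf, if_neg hne, if_pos (hexit.mem hi hin)]

theorem Df_union_inter_subset (h : IsLastGap σ T β R) (hσ : ∀ x, x ∈ periodicPts σ) :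
    Df σ p (T ∪ {(σ ^ R) β}) β ∩
      {κ | ∀ i, 0 < i → i < nn σ T β → (σ ^ i) β ∉ T → 0 ≤ LT σ p T ((σ ^ i) β) κ} ⊆
        Df σ p T β := by
  rintro κ ⟨hκ, hgap⟩ τ hτ hτn
  by_cases harc : ∃ i, 0 < i ∧ i < nn σ T β ∧ τ = (σ ^ i) β
  · obtain ⟨i, hi, hin, rfl⟩ := harc
    rw [h.LTf_pow_apply hσ hi hin]
    exact hgap i hi hin hτ
  have hnonneg := hgap R h.pos h.lt h.notMem
  have hτ' : τ ∉ T ∪ {(σ ^ R) β} :=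
    not_or.mpr ⟨hτ, fun he => harc ⟨R, h.pos, h.lt, he⟩⟩
  refine (hκ τ hτ' (h.nn_union hσ ▸ hτn)).trans ?_
  by_cases hτβ : τ = β
  · subst hτβ
    exact h.LTf_union_self_le hσ hnonneg
  · refine h.LTf_union_le_of_ne hσ hτ (fun i hi he => ?_) hnonneg
    rcases Nat.eq_zero_or_pos i with rfl | hpos
    · exact hτβ he
    · exact harc ⟨i, hpos, hi.trans h.lt, he⟩

end IsLastGap

theorem exists_eq_of_pow_apply_mem_gaps {ι : Type*} {r : ι → ℕ}
    (hσ : ∀ x, x ∈ periodicPts σ) (hβ : β ∈ BT σ T) (hlt : ∀ i, r i < nn σ T β)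
    (hset : {τ | ∃ i, 0 < i ∧ i < nn σ T β ∧ τ = (σ ^ i) β} ∩ (tilde σ T \ T) ⊆
      {τ | ∃ i, τ = (σ ^ r i) β}) (hj : 0 < j) (hjn : j < nn σ T β) (hjT : (σ ^ j) β ∉ T) :
    ∃ i, r i = j := by
  have hexit := isFirstExit_nn_of_mem_BT (hσ β) hβ
  obtain ⟨i, he⟩ := hset ⟨⟨j, hj, hjn, rfl⟩, hexit.mem hj hjn, hjT⟩
  exact ⟨i, hexit.injOn (hlt i) hjn he.symm⟩

theorem isLastGap_last {s : ℕ} {r : Fin (s + 1) → ℕ} (hσ : ∀ x, x ∈ periodicPts σ)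
    (hβ : β ∈ BT σ T) (hmono : StrictMono r) (hpos : ∀ i, 0 < r i) (hlt : ∀ i, r i < nn σ T β)
    (hset : {τ | ∃ i, 0 < i ∧ i < nn σ T β ∧ τ = (σ ^ i) β} ∩ (tilde σ T \ T) =
      {τ | ∃ i, τ = (σ ^ r i) β}) : IsLastGap σ T β (r (Fin.last s)) := by
  have hlast : (σ ^ r (Fin.last s)) β ∈ tilde σ T \ T := (hset.ge ⟨Fin.last s, rfl⟩).2
  refine ⟨hβ, hpos _, hlt _, hlast.1, hlast.2, fun j hRj hjn => by_contra fun hjT => ?_⟩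
  obtain ⟨i, rfl⟩ :=
    exists_eq_of_pow_apply_mem_gaps hσ hβ hlt hset.le ((hpos _).trans hRj) hjn hjT
  exact hRj.not_ge (hmono.monotone (Fin.le_last i))

end LastGap

end GO

theorem statement12_general {B : Type*} [DecidableEq B] (σ : Equiv.Perm B)
    (hσ : ∀ x, x ∈ Function.periodicPts σ) (p : ℕ) (T : Set B) (β : B) (hβ : β ∈ GO.BT σ T)
    (s : ℕ) (r : Fin (s + 1) → ℕ) (hmono : StrictMono r)
    (hpos : ∀ i, 0 < r i) (hlt : ∀ i, r i < GO.nn σ T β)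
    (hset : {τ : B | ∃ i, 0 < i ∧ i < GO.nn σ T β ∧ τ = (σ ^ i) β} ∩ (GO.tilde σ T \ T)
      = {τ : B | ∃ i : Fin (s + 1), τ = (σ ^ r i) β}) :
    GO.tilde σ (T ∪ {(σ ^ r (Fin.last s)) β}) = GO.tilde σ T ∧
    β ∈ GO.BT σ (T ∪ {(σ ^ r (Fin.last s)) β}) ∧
    GO.nn σ (T ∪ {(σ ^ r (Fin.last s)) β}) β = GO.nn σ T β ∧
    (GO.Df σ p (T ∪ {(σ ^ r (Fin.last s)) β}) β ∩
        {κ : B → ℚ | ∀ i : Fin (s + 1), 0 ≤ GO.LT σ p T ((σ ^ r i) β) κ}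
      ⊆ GO.Df σ p T β) := by
  have hgap := GO.isLastGap_last hσ hβ hmono hpos hlt hset
  refine ⟨hgap.tilde_union hσ, hgap.mem_BT_union hσ, hgap.nn_union hσ, ?_⟩
  rintro κ ⟨hκ, hnonneg⟩
  refine hgap.Df_union_inter_subset hσ ⟨hκ, fun j hj hjn hjT => ?_⟩
  obtain ⟨i, rfl⟩ := GO.exists_eq_of_pow_apply_mem_gaps hσ hβ hlt hset.le hj hjn hjT
  exact hnonneg i

/-- let `β ∈ 𝔹(T)` and suppose
`{σ^iβ : 0 < i < n_β} ∩ (T̃ − T) = {σ^{r₁}β, …, σ^{r_t}β}` with `t ≥ 1` (here `t = s+1`)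
and `0 < r₁ < ⋯ < r_t < n_β`.  Set `T′ = T ∪ {σ^{r_t}β}`.  Then `T̃′ = T̃`, `β ∈ 𝔹(T′)`
with the same `n_β`, and
`𝒟_{T′,f_β} ∩ {κ : L_{T,σ^{r_i}β}(κ) ≥ 0 ∀i} ⊆ 𝒟_{T,f_β}`. -/
theorem statement12 {B : Type*} [Fintype B] [DecidableEq B] [Nonempty B]
    (σ : Equiv.Perm B) (p : ℕ) (hp : p.Prime) (T : Set B) (β : B)
    (hβ : β ∈ GO.BT σ T)
    (s : ℕ) (r : Fin (s + 1) → ℕ) (hmono : StrictMono r)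
    (hpos : ∀ i, 0 < r i) (hlt : ∀ i, r i < GO.nn σ T β)
    (hset : {τ : B | ∃ i, 0 < i ∧ i < GO.nn σ T β ∧ τ = (σ ^ i) β} ∩ (GO.tilde σ T \ T)
      = {τ : B | ∃ i : Fin (s + 1), τ = (σ ^ r i) β}) :
    GO.tilde σ (T ∪ {(σ ^ r (Fin.last s)) β}) = GO.tilde σ T ∧
    β ∈ GO.BT σ (T ∪ {(σ ^ r (Fin.last s)) β}) ∧
    GO.nn σ (T ∪ {(σ ^ r (Fin.last s)) β}) β = GO.nn σ T β ∧
    (GO.Df σ p (T ∪ {(σ ^ r (Fin.last s)) β}) β ∩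
        {κ : B → ℚ | ∀ i : Fin (s + 1), 0 ≤ GO.LT σ p T ((σ ^ r i) β) κ}
      ⊆ GO.Df σ p T β) := by
  exact statement12_general σ (fun x => σ.injective.mem_periodicPts x) p T β hβ s r hmono hpos hlt
    hset
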